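/- Let f ∈ L¹[0,1] and γ > 0, and let the sampling S_k be either integral sampling, or point sampling at midpoints with f continuous. Then the fully discrete L¹-Potts functionals P_γ^k Γ-converge to P_γ in L¹[0,1]; every sequence (u_k), where u_k is a minimizer of P_γ^k, has at least one accumulation point in L¹[0,1]; and every such accumulation point u satisfies P_γ(u) = inf_{v ∈ L¹[0,1]} P_γ(v). -/

import Mathlib

open MeasureTheory Filter Set
open scoped ENNReal Classical

noncomputable section

/-- The Lebesgue measure restricted to `[0,1]`. -/
def mu01 : Measure ℝ := volume.restrict (Set.Icc (0:ℝ) 1)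

/-- The step function determined by partition points `x` and values `a`. -/
def stepF {m : ℕ} (x : Fin (m + 1) → ℝ) (a : Fin m → ℝ) : ℝ → ℝ := fun t =>
  ∑ l : Fin m, Set.indicator (Set.Ioo (x l.castSucc) (x l.succ)) (fun _ => a l) t

/-- `u` is a.e. on `[0,1]` represented by the step function with partition `x` and values `a`. -/
def IsPCRep (u : ℝ → ℝ) {m : ℕ} (x : Fin (m + 1) → ℝ) (a : Fin m → ℝ) : Prop :=
  StrictMono x ∧ x 0 = 0 ∧ x (Fin.last m) = 1 ∧ ∀ᵐ t ∂mu01, u t = stepF x a t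

/-- `u` is piecewise constant on `[0,1]` (up to a.e. equality). -/
def IsPC (u : ℝ → ℝ) : Prop :=
  ∃ (m : ℕ) (x : Fin (m + 1) → ℝ) (a : Fin m → ℝ), IsPCRep u x a

/-- The number of jumps `J(u)`: the minimal number of interior partition points over all
piecewise constant representations of `u`. -/
def jumps (u : ℝ → ℝ) : ℕ :=
  sInf {jj : ℕ | ∃ (x : Fin (jj + 2) → ℝ) (a : Fin (jj + 1) → ℝ), IsPCRep u x a}

/-- `u` is piecewise constant with all jump locations inside `S`. -/
def IsPCIn (u : ℝ → ℝ) (S : Set ℝ) : Prop :=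
  ∃ (m : ℕ) (x : Fin (m + 1) → ℝ) (a : Fin m → ℝ), IsPCRep u x a ∧
    ∀ i : Fin (m + 1), i ≠ 0 → i ≠ Fin.last m → x i ∈ S

/-- The `L¹[0,1]` distance of two functions. -/
def L1dist (u v : ℝ → ℝ) : ℝ := ∫ t, |u t - v t| ∂mu01

/-- The continuous `L¹`-Potts functional `P_γ` with data `f`. -/
def Potts (γ : ℝ) (f u : ℝ → ℝ) : ℝ≥0∞ :=
  if IsPC u then ENNReal.ofReal (γ * (jumps u : ℝ) + L1dist u f) else ⊤

/-- The (semi-)discrete `L¹`-Potts functional with data `f`, restricted to piecewise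
constant functions whose jumps lie in `S`. -/
def PottsIn (γ : ℝ) (f : ℝ → ℝ) (S : Set ℝ) (u : ℝ → ℝ) : ℝ≥0∞ :=
  if IsPCIn u S then ENNReal.ofReal (γ * (jumps u : ℝ) + L1dist u f) else ⊤

/-- `fk` agrees, on each interval between consecutive discretization points of
`{0,1} ∪ X`, with the average of `f` over that interval (integral sampling). -/
def IntegralSampled (X : Set ℝ) (f fk : ℝ → ℝ) : Prop :=
  ∀ a b : ℝ, a ∈ insert (0:ℝ) (insert 1 X) → b ∈ insert (0:ℝ) (insert 1 X) → a < b →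
    Set.Ioo a b ∩ X = ∅ →
    ∀ t ∈ Set.Ioo a b, fk t = (b - a)⁻¹ * ∫ s in Set.Ioo a b, f s

/-- `fk` agrees, on each interval between consecutive discretization points of
`{0,1} ∪ X`, with the value of `f` at the midpoint of that interval (point sampling). -/
def PointSampled (X : Set ℝ) (f fk : ℝ → ℝ) : Prop :=
  ∀ a b : ℝ, a ∈ insert (0:ℝ) (insert 1 X) → b ∈ insert (0:ℝ) (insert 1 X) → a < b →
    Set.Ioo a b ∩ X = ∅ →
    ∀ t ∈ Set.Ioo a b, fk t = f ((a + b) / 2)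

/-!
Let `u k → u` in `L¹[0,1]` with at most `N` jumps each. The partition points of `u k` and the masses
`a l * (x (l + 1) - x l)` stay in a compact subset of a finite-dimensional space, so both converge
along a subsequence. The values `a l` then converge on every interval that does not collapse, hence
`u k` converges almost everywhere to a step function with at most `N` jumps. Mass on collapsing
intervals could still concentrate, but convergent sequences are uniformly integrable, so by Vitali's
theorem the step function is the `L¹` limit. Functions with at most `N` jumps therefore form a
closed set, which gives the liminf inequality, and uniformly integrable sequences of them are
relatively compact. Recovery sequences are obtained by moving the jumps to nearby grid points.

Setting a minimizer to zero where it is at least `C` in modulus creates no jumps. By minimality its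
mass on that set is at most twice the mass of the data there, so minimizers inherit uniform
integrability from the convergent data. Their jumps are bounded by comparison with `0`, and
compactness yields accumulation points.

Sampled data converge to `f` because replacing `f` by its average on a cell costs at most
`2 * ∫ |f - c|` for every constant `c`, and `f` is `L¹`-close to a continuous function, which is
nearly constant on short cells.
-/

instance : IsFiniteMeasure mu01 := by
  unfold mu01
  infer_instance

instance : NullSingletonClass mu01 := by
  unfold mu01
  infer_instance

lemma mu01_Ioo {a b : ℝ} (ha : 0 ≤ a) (hb : b ≤ 1) : mu01 (Ioo a b) = ENNReal.ofReal (b - a) := by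
  rw [mu01, Measure.restrict_apply measurableSet_Ioo,
    inter_eq_self_of_subset_left (Ioo_subset_Icc_self.trans (Icc_subset_Icc ha hb)),
    Real.volume_Ioo]

lemma L1dist_nonneg (u v : ℝ → ℝ) : 0 ≤ L1dist u v :=
  integral_nonneg fun _ => abs_nonneg _

lemma L1dist_congr_ae {u u' v v' : ℝ → ℝ} (hu : u =ᵐ[mu01] u') (hv : v =ᵐ[mu01] v') :
    L1dist u v = L1dist u' v' :=
  integral_congr_ae <| by filter_upwards [hu, hv] with t h₁ h₂ using by rw [h₁, h₂]

lemma L1dist_eq_dist_toL1 {u v : ℝ → ℝ} (hu : Integrable u mu01) (hv : Integrable v mu01) :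
    L1dist u v = dist (hu.toL1 u) (hv.toL1 v) := by
  rw [dist_eq_norm, ← Integrable.toL1_sub, L1.norm_of_fun_eq_integral_norm]
  rfl

lemma eLpNorm_one_eq_ofReal_integral_abs {α : Type*} [MeasurableSpace α] {μ : Measure α}
    {u : α → ℝ} (hu : Integrable u μ) : eLpNorm u 1 μ = ENNReal.ofReal (∫ t, |u t| ∂μ) := by
  rw [eLpNorm_one_eq_lintegral_enorm, ← ofReal_integral_norm_eq_lintegral_enorm hu]
  rfl

lemma eLpNorm_sub_eq_ofReal_L1dist {u v : ℝ → ℝ} (hu : Integrable u mu01)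
    (hv : Integrable v mu01) : eLpNorm (u - v) 1 mu01 = ENNReal.ofReal (L1dist u v) :=
  eLpNorm_one_eq_ofReal_integral_abs (hu.sub hv)

section Convergence

variable {u f : ℝ → ℝ} {useq fseq : ℕ → ℝ → ℝ}

lemma tendsto_L1dist_zero_iff (hu : Integrable u mu01) (hus : ∀ k, Integrable (useq k) mu01) :
    Tendsto (fun k => L1dist (useq k) u) atTop (nhds 0) ↔
      Tendsto (fun k => (hus k).toL1 (useq k)) atTop (nhds (hu.toL1 u)) := by
  simp only [L1dist_eq_dist_toL1, hu, hus]
  exact tendsto_iff_dist_tendsto_zero.symm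

lemma tendsto_L1dist (hu : Integrable u mu01) (hf : Integrable f mu01)
    (hus : ∀ k, Integrable (useq k) mu01) (hfs : ∀ k, Integrable (fseq k) mu01)
    (hulim : Tendsto (fun k => L1dist (useq k) u) atTop (nhds 0))
    (hflim : Tendsto (fun k => L1dist (fseq k) f) atTop (nhds 0)) :
    Tendsto (fun k => L1dist (useq k) (fseq k)) atTop (nhds (L1dist u f)) := by
  simp only [L1dist_eq_dist_toL1, hus, hfs, hu, hf]
  exact ((tendsto_L1dist_zero_iff hu hus).1 hulim).dist ((tendsto_L1dist_zero_iff hf hfs).1 hflim)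

lemma ae_eq_of_tendsto_L1dist (hu : Integrable u mu01) (hf : Integrable f mu01)
    (hus : ∀ k, Integrable (useq k) mu01)
    (hulim : Tendsto (fun k => L1dist (useq k) u) atTop (nhds 0))
    (hflim : Tendsto (fun k => L1dist (useq k) f) atTop (nhds 0)) : u =ᵐ[mu01] f :=
  (Integrable.toL1_eq_toL1_iff _ _ hu hf).1 <| tendsto_nhds_unique
    ((tendsto_L1dist_zero_iff hu hus).1 hulim) ((tendsto_L1dist_zero_iff hf hus).1 hflim)

lemma uniformIntegrable_of_tendsto_L1dist (hu : Integrable u mu01)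
    (hus : ∀ k, Integrable (useq k) mu01)
    (hulim : Tendsto (fun k => L1dist (useq k) u) atTop (nhds 0)) :
    UniformIntegrable useq 1 mu01 := by
  have hnorm : Tendsto (fun k => eLpNorm (useq k - u) 1 mu01) atTop (nhds 0) := by
    simpa only [eLpNorm_sub_eq_ofReal_L1dist (hus _) hu, ENNReal.ofReal_zero] using
      ENNReal.tendsto_ofReal hulim
  obtain ⟨C, hC⟩ := ((tendsto_L1dist_zero_iff hu hus).1 hulim).norm.bddAbove_range
  refine ⟨fun k => (hus k).aestronglyMeasurable, unifIntegrable_of_tendsto_Lp le_rfl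
    ENNReal.one_ne_top (fun k => memLp_one_iff_integrable.2 (hus k))
    (memLp_one_iff_integrable.2 hu) hnorm, C.toNNReal, fun k => ?_⟩
  rw [eLpNorm_one_eq_ofReal_integral_abs (hus k), ← ENNReal.ofReal]
  refine ENNReal.ofReal_le_ofReal ?_
  have hk := hC (mem_range_self k)
  rwa [L1.norm_of_fun_eq_integral_norm] at hk

end Convergence

section StepFunctions

variable {m : ℕ} {x : Fin (m + 1) → ℝ}

lemma stepF_apply_of_mem_Ioo (hx : Monotone x) (a : Fin m → ℝ) {t : ℝ} {l : Fin m}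
    (ht : t ∈ Ioo (x l.castSucc) (x l.succ)) : stepF x a t = a l := by
  rw [stepF, Finset.sum_eq_single_of_mem l (Finset.mem_univ l), indicator_of_mem ht]
  refine fun i _ hil => indicator_of_notMem (fun hti => ?_) _
  rcases lt_or_gt_of_ne hil with h | h
  · exact (hti.2.trans_le (hx (Fin.succ_le_castSucc_iff.2 h))).not_gt ht.1
  · exact (ht.2.trans_le (hx (Fin.succ_le_castSucc_iff.2 h))).not_gt hti.1

lemma comp_stepF (hx : Monotone x) (a : Fin m → ℝ) {g : ℝ → ℝ} (hg : g 0 = 0) :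
    g ∘ stepF x a = stepF x (g ∘ a) := by
  ext t
  by_cases ht : ∃ l : Fin m, t ∈ Ioo (x l.castSucc) (x l.succ)
  · obtain ⟨l, hl⟩ := ht
    simp only [Function.comp_apply, stepF_apply_of_mem_Ioo hx _ hl]
  · have hzero (c : Fin m → ℝ) : stepF x c t = 0 :=
      Finset.sum_eq_zero fun l _ => indicator_of_notMem (fun hl => ht ⟨l, hl⟩) _
    rw [Function.comp_apply, hzero, hzero, hg]

lemma integrable_stepF (x : Fin (m + 1) → ℝ) (a : Fin m → ℝ) : Integrable (stepF x a) mu01 :=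
  integrable_finsetSum _ fun _ _ => (integrable_const _).indicator measurableSet_Ioo

lemma comp_castSucc_succAbove_eq {x : Fin (m + 2) → ℝ} {i : Fin (m + 1)}
    (hi : x i.castSucc = x i.succ) : x ∘ i.castSucc.succAbove = x ∘ i.succ.succAbove := by
  ext j
  rcases lt_trichotomy j i with h | rfl | h
  · simp only [Function.comp_apply, Fin.succAbove_castSucc_of_lt _ _ h,
      Fin.succAbove_succ_of_le _ _ h.le]
  · simp only [Function.comp_apply, Fin.succAbove_castSucc_self, Fin.succAbove_succ_self, hi]
  · simp only [Function.comp_apply, Fin.succAbove_castSucc_of_le _ _ h.le,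
      Fin.succAbove_succ_of_lt _ _ h]

lemma stepF_comp_succAbove {x : Fin (m + 2) → ℝ} {i : Fin (m + 1)} (hi : x i.castSucc = x i.succ)
    (a : Fin (m + 1) → ℝ) : stepF (x ∘ i.castSucc.succAbove) (a ∘ i.succAbove) = stepF x a := by
  ext t
  rw [stepF, stepF, Fin.sum_univ_succAbove _ i, hi, Ioo_self, indicator_empty, zero_add]
  refine Finset.sum_congr rfl fun j _ => ?_
  rw [Function.comp_apply, Fin.castSucc_succAbove_castSucc, comp_castSucc_succAbove_eq hi,
    Function.comp_apply, Fin.succ_succAbove_succ, Function.comp_apply]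

end StepFunctions

/-- A representation of `u` on `[0,1]` by a step function in which consecutive partition points may
coincide. Degenerate intervals are allowed so that limits of representations are representations. -/
def IsWeakPCRep (u : ℝ → ℝ) {m : ℕ} (x : Fin (m + 1) → ℝ) (a : Fin m → ℝ) : Prop :=
  Monotone x ∧ x 0 = 0 ∧ x (Fin.last m) = 1 ∧ u =ᵐ[mu01] stepF x a

section Representations

variable {u : ℝ → ℝ} {m : ℕ} {x : Fin (m + 1) → ℝ} {a : Fin m → ℝ}

lemma IsPCRep.isWeakPCRep (h : IsPCRep u x a) : IsWeakPCRep u x a :=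
  ⟨h.1.monotone, h.2⟩

lemma IsWeakPCRep.mem_Icc (h : IsWeakPCRep u x a) (i : Fin (m + 1)) : x i ∈ Icc (0 : ℝ) 1 :=
  ⟨h.2.1 ▸ h.1 (Fin.zero_le i), h.2.2.1 ▸ h.1 (Fin.le_last i)⟩

lemma IsWeakPCRep.congr_ae {v : ℝ → ℝ} (h : IsWeakPCRep u x a) (hvu : v =ᵐ[mu01] u) :
    IsWeakPCRep v x a :=
  ⟨h.1, h.2.1, h.2.2.1, hvu.trans h.2.2.2⟩

lemma IsWeakPCRep.integrable (h : IsWeakPCRep u x a) : Integrable u mu01 :=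
  (integrable_stepF x a).congr h.2.2.2.symm

lemma IsWeakPCRep.comp_succAbove {x : Fin (m + 2) → ℝ} {a : Fin (m + 1) → ℝ}
    (h : IsWeakPCRep u x a) {i : Fin (m + 1)} (hi : x i.castSucc = x i.succ) :
    IsWeakPCRep u (x ∘ i.castSucc.succAbove) (a ∘ i.succAbove) := by
  refine ⟨h.1.comp (Fin.strictMono_succAbove _).monotone, ?_, ?_, ?_⟩
  · rw [comp_castSucc_succAbove_eq hi, Function.comp_apply, Fin.succ_succAbove_zero, h.2.1]
  · rw [Function.comp_apply, Fin.succAbove_ne_last_last (Fin.castSucc_ne_last i), h.2.2.1]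
  · rw [stepF_comp_succAbove hi]
    exact h.2.2.2

lemma IsWeakPCRep.exists_isPCRep (h : IsWeakPCRep u x a) :
    ∃ n ≤ m, ∃ (y : Fin (n + 1) → ℝ) (b : Fin n → ℝ), IsPCRep u y b := by
  induction m with
  | zero => exact ⟨0, le_rfl, x, a, Fin.strictMono_iff_lt_succ.2 fun i => i.elim0, h.2⟩
  | succ m ih =>
    by_cases hx : ∀ i : Fin (m + 1), x i.castSucc < x i.succ
    · exact ⟨m + 1, le_rfl, x, a, Fin.strictMono_iff_lt_succ.2 hx, h.2⟩
    · push Not at hx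
      obtain ⟨i, hi⟩ := hx
      obtain ⟨n, hn, hrep⟩ := ih (h.comp_succAbove (hi.antisymm' (h.1 i.castSucc_lt_succ.le)))
      exact ⟨n, hn.trans m.le_succ, hrep⟩

lemma IsWeakPCRep.isPC (h : IsWeakPCRep u x a) : IsPC u :=
  let ⟨n, _, y, b, hrep⟩ := h.exists_isPCRep
  ⟨n, y, b, hrep⟩

lemma IsWeakPCRep.jumps_lt (h : IsWeakPCRep u x a) : jumps u < m := by
  obtain ⟨n, hn, y, b, hrep⟩ := h.exists_isPCRep
  rcases n with _ | n
  · exact absurd (hrep.2.1.symm.trans hrep.2.2.1) zero_ne_one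
  · have hjumps : jumps u ≤ n := Nat.sInf_le ⟨y, b, hrep⟩
    exact hjumps.trans_lt hn

lemma IsPC.exists_isPCRep_jumps (h : IsPC u) :
    ∃ (x : Fin (jumps u + 2) → ℝ) (a : Fin (jumps u + 1) → ℝ), IsPCRep u x a := by
  obtain ⟨m, x, a, hrep⟩ := h
  obtain ⟨m, rfl⟩ : ∃ n, m = n + 1 := Nat.exists_eq_add_one.2 hrep.isWeakPCRep.jumps_lt.pos
  exact Nat.sInf_mem (s := {j | ∃ (x : Fin (j + 2) → ℝ) (a : Fin (j + 1) → ℝ), IsPCRep u x a})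
    ⟨m, x, a, hrep⟩

lemma IsPC.integrable (h : IsPC u) : Integrable u mu01 :=
  let ⟨_, _, _, hrep⟩ := h
  hrep.isWeakPCRep.integrable

lemma IsPCRep.comp (h : IsPCRep u x a) {g : ℝ → ℝ} (hg : g 0 = 0) :
    IsPCRep (g ∘ u) x (g ∘ a) := by
  refine ⟨h.1, h.2.1, h.2.2.1, h.2.2.2.mono fun t ht => ?_⟩
  rw [← comp_stepF h.1.monotone a hg, Function.comp_apply, Function.comp_apply, ht]

lemma IsPC.jumps_comp_le (h : IsPC u) {g : ℝ → ℝ} (hg : g 0 = 0) : jumps (g ∘ u) ≤ jumps u := by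
  obtain ⟨x, a, hrep⟩ := h.exists_isPCRep_jumps
  exact Nat.lt_succ_iff.1 (hrep.comp hg).isWeakPCRep.jumps_lt

lemma isPCRep_zero : IsPCRep (fun _ => 0) ![0, 1] ![0] := by
  refine ⟨Fin.strictMono_iff_lt_succ.2 fun i => ?_, rfl, rfl, .of_forall fun t => ?_⟩
  · rw [Subsingleton.elim i 0]
    exact zero_lt_one
  · simp [stepF]

end Representations

section JumpsInSet

variable {u : ℝ → ℝ} {S : Set ℝ}

lemma IsPCIn.isPC (h : IsPCIn u S) : IsPC u :=
  let ⟨m, x, a, hrep, _⟩ := h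
  ⟨m, x, a, hrep⟩

lemma isPCIn_univ_iff : IsPCIn u univ ↔ IsPC u :=
  ⟨IsPCIn.isPC, fun ⟨m, x, a, hrep⟩ => ⟨m, x, a, hrep, fun _ _ _ => mem_univ _⟩⟩

lemma IsPCIn.comp (h : IsPCIn u S) {g : ℝ → ℝ} (hg : g 0 = 0) : IsPCIn (g ∘ u) S :=
  let ⟨m, x, a, hrep, hxS⟩ := h
  ⟨m, x, g ∘ a, hrep.comp hg, hxS⟩

lemma isPCIn_zero (S : Set ℝ) : IsPCIn (fun _ => 0) S :=
  ⟨1, ![0, 1], ![0], isPCRep_zero, fun i h₀ h₁ => by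
    fin_cases i
    exacts [absurd rfl h₀, absurd rfl h₁]⟩

lemma jumps_zero : jumps (fun _ => 0) = 0 :=
  Nat.lt_one_iff.1 isPCRep_zero.isWeakPCRep.jumps_lt

end JumpsInSet

section Functional

variable {γ B : ℝ} {f u : ℝ → ℝ} {S : Set ℝ}

lemma pottsIn_univ (γ : ℝ) (f u : ℝ → ℝ) : PottsIn γ f univ u = Potts γ f u := by
  simp only [PottsIn, Potts, isPCIn_univ_iff]

lemma pottsIn_le_ofReal_iff (hB : 0 ≤ B) : PottsIn γ f S u ≤ ENNReal.ofReal B ↔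
    IsPCIn u S ∧ γ * jumps u + L1dist u f ≤ B := by
  by_cases h : IsPCIn u S
  · simp [PottsIn, h, ENNReal.ofReal_le_ofReal_iff hB]
  · simp [PottsIn, h]

end Functional

section StepLimits

lemma tendsto_indicator_Ioo {p q c : ℕ → ℝ} {p₀ q₀ c₀ t : ℝ} (hp : Tendsto p atTop (nhds p₀))
    (hq : Tendsto q atTop (nhds q₀)) (hc : p₀ < q₀ → Tendsto c atTop (nhds c₀))
    (htp : t ≠ p₀) (htq : t ≠ q₀) :
    Tendsto (fun k => (Ioo (p k) (q k)).indicator (fun _ => c k) t) atTop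
      (nhds ((Ioo p₀ q₀).indicator (fun _ => c₀) t)) := by
  by_cases ht : t ∈ Ioo p₀ q₀
  · rw [indicator_of_mem ht]
    refine (hc (ht.1.trans ht.2)).congr' ?_
    filter_upwards [hp.eventually_lt_const ht.1, hq.eventually_const_lt ht.2] with k hpk hqk
    rw [indicator_of_mem (mem_Ioo.2 ⟨hpk, hqk⟩)]
  · rw [indicator_of_notMem ht]
    refine tendsto_const_nhds.congr' ?_
    rcases htp.lt_or_gt with h | h
    · filter_upwards [hp.eventually_const_lt h] with k hk
      rw [indicator_of_notMem (notMem_Ioo_of_le hk.le)]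
    · have hqt : q₀ < t := (le_of_not_gt fun hlt => ht ⟨h, hlt⟩).lt_of_ne htq.symm
      filter_upwards [hq.eventually_lt_const hqt] with k hk
      rw [indicator_of_notMem (notMem_Ioo_of_ge hk.le)]

lemma ae_tendsto_stepF {m : ℕ} {x : ℕ → Fin (m + 1) → ℝ} {a : ℕ → Fin m → ℝ}
    {y : Fin (m + 1) → ℝ} {b : Fin m → ℝ} (hx : Tendsto x atTop (nhds y))
    (ha : ∀ l, y l.castSucc < y l.succ → Tendsto (fun k => a k l) atTop (nhds (b l))) :
    ∀ᵐ t ∂mu01, Tendsto (fun k => stepF (x k) (a k) t) atTop (nhds (stepF y b t)) := by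
  have hx' := tendsto_pi_nhds.1 hx
  filter_upwards [ae_all_iff.2 fun i => Measure.ae_ne mu01 (y i)] with t ht
  exact tendsto_finsetSum _ fun l _ =>
    tendsto_indicator_Ioo (hx' l.castSucc) (hx' l.succ) (ha l) (ht _) (ht _)

end StepLimits

section Compactness

variable {u : ℕ → ℝ → ℝ}

lemma tendsto_L1dist_of_ae_tendsto {w : ℝ → ℝ} (hu : UniformIntegrable u 1 mu01)
    (hw : Integrable w mu01) (hlim : ∀ᵐ t ∂mu01, Tendsto (fun k => u k t) atTop (nhds (w t))) :
    Tendsto (fun k => L1dist (u k) w) atTop (nhds 0) := by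
  have hnorm := tendsto_Lp_finite_of_tendsto_ae le_rfl ENNReal.one_ne_top hu.1
    (memLp_one_iff_integrable.2 hw) hu.2.1 hlim
  have hint (k : ℕ) : Integrable (u k) mu01 := memLp_one_iff_integrable.1 (hu.memLp k)
  simp only [eLpNorm_sub_eq_ofReal_L1dist (hint _) hw] at hnorm
  simpa only [Function.comp_def, ENNReal.toReal_ofReal (L1dist_nonneg _ _), ENNReal.toReal_zero]
    using (ENNReal.tendsto_toReal ENNReal.zero_ne_top).comp hnorm

lemma uniformIntegrable_comp {ι κ α β : Type*} [MeasurableSpace α] {μ : Measure α}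
    [NormedAddCommGroup β] {p : ℝ≥0∞} {u : ι → α → β} (hu : UniformIntegrable u p μ) (φ : κ → ι) :
    UniformIntegrable (fun k => u (φ k)) p μ := by
  obtain ⟨hmeas, hunif, C, hC⟩ := hu
  refine ⟨fun k => hmeas (φ k), fun ε hε => ?_, C, fun k => hC (φ k)⟩
  obtain ⟨δ, hδ, h⟩ := hunif hε
  exact ⟨δ, hδ, fun k => h (φ k)⟩

lemma exists_forall_integral_abs_le (hu : UniformIntegrable u 1 mu01) :
    ∃ C, ∀ k, ∫ t, |u k t| ∂mu01 ≤ C := by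
  obtain ⟨C, hC⟩ := hu.2.2
  refine ⟨C, fun k => ?_⟩
  rw [← ENNReal.ofReal_le_ofReal_iff C.coe_nonneg, ENNReal.ofReal_coe_nnreal,
    ← eLpNorm_one_eq_ofReal_integral_abs (memLp_one_iff_integrable.1 (hu.memLp k))]
  exact hC k

lemma IsWeakPCRep.abs_mul_length_le {u : ℝ → ℝ} {m : ℕ} {x : Fin (m + 1) → ℝ} {a : Fin m → ℝ}
    (h : IsWeakPCRep u x a) (l : Fin m) :
    |a l * (x l.succ - x l.castSucc)| ≤ ∫ t, |u t| ∂mu01 := by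
  have hle : x l.castSucc ≤ x l.succ := h.1 l.castSucc_lt_succ.le
  have hmeasure : mu01.real (Ioo (x l.castSucc) (x l.succ)) = x l.succ - x l.castSucc := by
    rw [measureReal_def, mu01_Ioo (h.mem_Icc _).1 (h.mem_Icc _).2,
      ENNReal.toReal_ofReal (sub_nonneg.2 hle)]
  have hconst : ∫ t in Ioo (x l.castSucc) (x l.succ), |u t| ∂mu01 =
      |a l| * (x l.succ - x l.castSucc) := by
    rw [setIntegral_congr_ae (g := fun _ => |a l|) measurableSet_Ioo, setIntegral_const, hmeasure,
      smul_eq_mul, mul_comm]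
    filter_upwards [h.2.2.2] with t ht hmem
    rw [ht, stepF_apply_of_mem_Ioo h.1 a hmem]
  rw [abs_mul, abs_of_nonneg (sub_nonneg.2 hle), ← hconst]
  exact setIntegral_le_integral h.integrable.abs (.of_forall fun _ => abs_nonneg _)

lemma exists_subseq_partitions_masses_tendsto {m : ℕ} {x : ℕ → Fin (m + 1) → ℝ}
    {a : ℕ → Fin m → ℝ} (hrep : ∀ k, IsWeakPCRep (u k) (x k) (a k))
    (hu : UniformIntegrable u 1 mu01) :
    ∃ (φ : ℕ → ℕ) (y : Fin (m + 1) → ℝ) (M : Fin m → ℝ), StrictMono φ ∧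
      Tendsto (x ∘ φ) atTop (nhds y) ∧
      ∀ l, Tendsto (fun k => a (φ k) l * (x (φ k) l.succ - x (φ k) l.castSucc)) atTop
        (nhds (M l)) := by
  obtain ⟨C, hC⟩ := exists_forall_integral_abs_le hu
  let mass (k : ℕ) (l : Fin m) : ℝ := a k l * (x k l.succ - x k l.castSucc)
  let K : Set ((Fin (m + 1) → ℝ) × (Fin m → ℝ)) :=
    univ.pi (fun _ => Icc 0 1) ×ˢ univ.pi fun _ => Icc (-C) C
  have hK : IsCompact K :=
    (isCompact_univ_pi fun _ => isCompact_Icc).prod (isCompact_univ_pi fun _ => isCompact_Icc)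
  have hmem (k : ℕ) : (x k, mass k) ∈ K :=
    ⟨fun i _ => (hrep k).mem_Icc i,
      fun l _ => abs_le.1 (((hrep k).abs_mul_length_le l).trans (hC k))⟩
  obtain ⟨⟨y, M⟩, -, φ, hφ, hlim⟩ := hK.tendsto_subseq hmem
  exact ⟨φ, y, M, hφ, hlim.fst_nhds, tendsto_pi_nhds.1 hlim.snd_nhds⟩

theorem exists_subseq_tendsto_of_isWeakPCRep {m : ℕ} {x : ℕ → Fin (m + 1) → ℝ}
    {a : ℕ → Fin m → ℝ} (hrep : ∀ k, IsWeakPCRep (u k) (x k) (a k))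
    (hu : UniformIntegrable u 1 mu01) :
    ∃ (φ : ℕ → ℕ) (w : ℝ → ℝ) (y : Fin (m + 1) → ℝ) (b : Fin m → ℝ), StrictMono φ ∧
      IsWeakPCRep w y b ∧ Tendsto (fun k => L1dist (u (φ k)) w) atTop (nhds 0) := by
  obtain ⟨φ, y, M, hφ, hx, hmass⟩ := exists_subseq_partitions_masses_tendsto hrep hu
  have hx' := tendsto_pi_nhds.1 hx
  let b (l : Fin m) : ℝ := M l / (y l.succ - y l.castSucc)
  have hvalues (l : Fin m) (hl : y l.castSucc < y l.succ) :
      Tendsto (fun k => a (φ k) l) atTop (nhds (b l)) := by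
    have hgap := (hx' l.succ).sub (hx' l.castSucc)
    have hne : y l.succ - y l.castSucc ≠ 0 := (sub_pos.2 hl).ne'
    refine ((hmass l).div hgap hne).congr' ?_
    filter_upwards [hgap.eventually_ne hne] with k hk using mul_div_cancel_right₀ _ hk
  refine ⟨φ, stepF y b, y, b, hφ, ⟨?_, ?_, ?_, .rfl⟩, ?_⟩
  · exact fun i j hij => le_of_tendsto_of_tendsto' (hx' i) (hx' j) fun k => (hrep (φ k)).1 hij
  · exact tendsto_nhds_unique (hx' 0) (by simp [(hrep _).2.1])
  · exact tendsto_nhds_unique (hx' (Fin.last m)) (by simp [(hrep _).2.2.1])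
  · refine tendsto_L1dist_of_ae_tendsto (uniformIntegrable_comp hu φ) (integrable_stepF y b) ?_
    filter_upwards [ae_tendsto_stepF hx hvalues, ae_all_iff.2 fun k => (hrep (φ k)).2.2.2]
      with t hlim heq
    simpa only [heq, Function.comp_apply] using hlim

theorem exists_subseq_tendsto_of_jumps_le {N : ℕ}
    (hPC : ∃ᶠ k in atTop, IsPC (u k) ∧ jumps (u k) ≤ N) (hu : UniformIntegrable u 1 mu01) :
    ∃ (φ : ℕ → ℕ) (w : ℝ → ℝ), StrictMono φ ∧ IsPC w ∧ jumps w ≤ N ∧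
      Tendsto (fun k => L1dist (u (φ k)) w) atTop (nhds 0) := by
  have hpigeonhole : ∃ᶠ k in atTop, ∃ j ∈ Iic N, IsPC (u k) ∧ jumps (u k) = j :=
    hPC.mono fun k hk => ⟨jumps (u k), hk.2, hk.1, rfl⟩
  obtain ⟨j, hj, hfreq⟩ := (frequently_exists_finite (finite_Iic N)).1 hpigeonhole
  obtain ⟨φ, hφ, hφj⟩ := extraction_of_frequently_atTop hfreq
  have hrep (k : ℕ) : ∃ (x : Fin (j + 2) → ℝ) (a : Fin (j + 1) → ℝ), IsPCRep (u (φ k)) x a :=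
    (hφj k).2 ▸ (hφj k).1.exists_isPCRep_jumps
  choose x a hrep using hrep
  obtain ⟨ψ, w, y, b, hψ, hw, hlim⟩ := exists_subseq_tendsto_of_isWeakPCRep
    (fun k => (hrep k).isWeakPCRep) (uniformIntegrable_comp hu φ)
  exact ⟨φ ∘ ψ, w, hφ.comp hψ, hw.isPC, (Nat.lt_succ_iff.1 hw.jumps_lt).trans hj, hlim⟩

end Compactness

section LowerSemicontinuity

variable {γ : ℝ} {f u : ℝ → ℝ} {fseq useq : ℕ → ℝ → ℝ}

theorem isPC_and_jumps_le_of_tendsto {N : ℕ} (hu : Integrable u mu01)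
    (hus : ∀ k, Integrable (useq k) mu01)
    (hlim : Tendsto (fun k => L1dist (useq k) u) atTop (nhds 0))
    (hPC : ∃ᶠ k in atTop, IsPC (useq k) ∧ jumps (useq k) ≤ N) : IsPC u ∧ jumps u ≤ N := by
  obtain ⟨φ, w, hφ, hw, hwN, hφlim⟩ := exists_subseq_tendsto_of_jumps_le hPC
    (uniformIntegrable_of_tendsto_L1dist hu hus hlim)
  have huw : u =ᵐ[mu01] w := ae_eq_of_tendsto_L1dist hu hw.integrable (fun k => hus (φ k))
    (hlim.comp hφ.tendsto_atTop) hφlim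
  obtain ⟨x, a, hrep⟩ := hw.exists_isPCRep_jumps
  have hrep' := hrep.isWeakPCRep.congr_ae huw
  exact ⟨hrep'.isPC, (Nat.lt_succ_iff.1 hrep'.jumps_lt).trans hwN⟩

theorem isPC_and_energy_le_of_frequently {B : ℝ} (hγ : 0 < γ) (hf : Integrable f mu01)
    (hfs : ∀ k, Integrable (fseq k) mu01)
    (hflim : Tendsto (fun k => L1dist (fseq k) f) atTop (nhds 0)) (hu : Integrable u mu01)
    (hus : ∀ k, Integrable (useq k) mu01)
    (hulim : Tendsto (fun k => L1dist (useq k) u) atTop (nhds 0))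
    (hfreq : ∃ᶠ k in atTop, IsPC (useq k) ∧ γ * jumps (useq k) + L1dist (useq k) (fseq k) ≤ B) :
    IsPC u ∧ γ * jumps u + L1dist u f ≤ B := by
  have hdist := tendsto_L1dist hu hf hus hfs hulim hflim
  have hε (ε : ℝ) (hε : 0 < ε) : IsPC u ∧ γ * jumps u + L1dist u f ≤ B + ε := by
    have hjumps : ∃ᶠ k in atTop, IsPC (useq k) ∧ jumps (useq k) ≤ (B + ε - L1dist u f) / γ := by
      refine (hfreq.and_eventually (hdist.eventually_const_le (sub_lt_self _ hε))).mono ?_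
      rintro k ⟨⟨hPC, hB⟩, hd⟩
      refine ⟨hPC, (le_div_iff₀ hγ).2 ?_⟩
      linarith
    obtain ⟨k, -, hk⟩ := hjumps.exists
    have hnonneg : 0 ≤ (B + ε - L1dist u f) / γ := (Nat.cast_nonneg _).trans hk
    obtain ⟨hPC, hle⟩ := isPC_and_jumps_le_of_tendsto hu hus hulim <|
      hjumps.mono fun k hk => ⟨hk.1, Nat.le_floor hk.2⟩
    have hbound := (le_div_iff₀ hγ).1 ((Nat.le_floor_iff hnonneg).1 hle)
    exact ⟨hPC, by linarith⟩
  exact ⟨(hε 1 one_pos).1, le_of_forall_pos_le_add fun ε hpos => (hε ε hpos).2⟩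

theorem potts_le_liminf (hγ : 0 < γ) (X : ℕ → Set ℝ) (hf : Integrable f mu01)
    (hfs : ∀ k, Integrable (fseq k) mu01)
    (hflim : Tendsto (fun k => L1dist (fseq k) f) atTop (nhds 0)) (hu : Integrable u mu01)
    (hus : ∀ k, Integrable (useq k) mu01)
    (hulim : Tendsto (fun k => L1dist (useq k) u) atTop (nhds 0)) :
    Potts γ f u ≤ liminf (fun k => PottsIn γ (fseq k) (X k) (useq k)) atTop := by
  refine le_of_forall_gt_imp_ge_of_dense fun C hC => ?_
  induction C with
  | top => exact le_top
  | coe B =>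
    have hfreq := (frequently_lt_of_liminf_lt (h := hC)).mono fun k hk =>
      (pottsIn_le_ofReal_iff B.coe_nonneg).1 (ENNReal.ofReal_coe_nnreal ▸ hk.le)
    have hle := isPC_and_energy_le_of_frequently hγ hf hfs hflim hu hus hulim <|
      hfreq.mono fun k hk => ⟨hk.1.isPC, hk.2⟩
    rw [← pottsIn_univ, ← ENNReal.ofReal_coe_nnreal]
    exact (pottsIn_le_ofReal_iff B.coe_nonneg).2 ⟨isPCIn_univ_iff.2 hle.1, hle.2⟩

end LowerSemicontinuity

/-- The sets `X k` become dense in `[0,1]`: for every `δ > 0`, all but finitely many of them meet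
the `δ`-neighbourhood of each point of `[0,1]`. -/
def AsymptoticallyDense (X : ℕ → Set ℝ) : Prop :=
  ∀ δ > 0, ∀ᶠ k in atTop, Icc 0 1 ⊆ Metric.thickening δ (X k)

section AsymptoticDensity

variable {X : ℕ → Set ℝ}

lemma eventually_subset_thickening_of_subset_closure_iUnion {α : Type*} [PseudoMetricSpace α]
    {K : Set α} {X : ℕ → Set α} (hK : IsCompact K) (hX : Monotone X)
    (hdense : K ⊆ closure (⋃ k, X k)) {δ : ℝ} (hδ : 0 < δ) :
    ∀ᶠ k in atTop, K ⊆ Metric.thickening δ (X k) := by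
  have hmono : Monotone fun k => Metric.thickening δ (X k) := fun i j hij =>
    Metric.thickening_subset_of_subset δ (hX hij)
  have hcover : K ⊆ ⋃ k, Metric.thickening δ (X k) := by
    rw [← Metric.thickening_iUnion]
    exact hdense.trans (Metric.closure_subset_thickening hδ _)
  obtain ⟨n, hn⟩ := hK.elim_directed_cover _ (fun _ => Metric.isOpen_thickening) hcover
    hmono.directed_le
  filter_upwards [eventually_ge_atTop n] with k hk using hn.trans (hmono hk)

lemma asymptoticallyDense_of_subset_closure_iUnion (hX : Monotone X)
    (hdense : Icc 0 1 ⊆ closure (⋃ k, X k)) : AsymptoticallyDense X := fun _ hδ =>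
  eventually_subset_thickening_of_subset_closure_iUnion isCompact_Icc hX hdense hδ

lemma AsymptoticallyDense.comp (hX : AsymptoticallyDense X) {φ : ℕ → ℕ} (hφ : StrictMono φ) :
    AsymptoticallyDense (X ∘ φ) := fun δ hδ => hφ.tendsto_atTop.eventually (hX δ hδ)

lemma AsymptoticallyDense.exists_tendsto (hX : AsymptoticallyDense X) {y : ℝ}
    (hy : y ∈ Icc (0 : ℝ) 1) :
    ∃ z : ℕ → ℝ, Tendsto z atTop (nhds y) ∧ ∀ᶠ k in atTop, z k ∈ X k := by
  have hnear (k : ℕ) : ∃ z, (X k).Nonempty →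
      z ∈ X k ∧ dist y z < Metric.infDist y (X k) + 1 / (k + 1) := by
    by_cases hk : (X k).Nonempty
    · obtain ⟨z, hz⟩ := (Metric.infDist_lt_iff hk).1
        (lt_add_of_pos_right (Metric.infDist y (X k)) Nat.one_div_pos_of_nat)
      exact ⟨z, fun _ => hz⟩
    · exact ⟨0, fun h => absurd h hk⟩
  choose z hz using hnear
  have hnonempty : ∀ᶠ k in atTop, (X k).Nonempty := (hX 1 one_pos).mono fun k hk =>
    let ⟨x, hx, _⟩ := Metric.mem_thickening_iff.1 (hk hy)
    ⟨x, hx⟩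
  have hinfDist : Tendsto (fun k => Metric.infDist y (X k)) atTop (nhds 0) := by
    refine tendsto_order.2 ⟨fun b hb => .of_forall fun k => hb.trans_le Metric.infDist_nonneg,
      fun δ hδ => ?_⟩
    filter_upwards [hX δ hδ] with k hk
    obtain ⟨x, hx, hyx⟩ := Metric.mem_thickening_iff.1 (hk hy)
    exact (Metric.infDist_le_dist_of_mem hx).trans_lt hyx
  refine ⟨z, tendsto_iff_dist_tendsto_zero.2 ?_, hnonempty.mono fun k hk => (hz k hk).1⟩
  refine squeeze_zero' (.of_forall fun _ => dist_nonneg)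
    (hnonempty.mono fun k hk => (dist_comm y (z k) ▸ (hz k hk).2).le) ?_
  simpa only [add_zero] using hinfDist.add tendsto_one_div_add_atTop_nhds_zero_nat

end AsymptoticDensity

section Recovery

variable {X : ℕ → Set ℝ} {u : ℝ → ℝ} {m : ℕ} {x : Fin (m + 1) → ℝ} {a : Fin m → ℝ}

lemma exists_partitions_tendsto (hX : AsymptoticallyDense X) (hrep : IsPCRep u x a) :
    ∃ z : ℕ → Fin (m + 1) → ℝ, Tendsto z atTop (nhds x) ∧
      ∀ᶠ k in atTop, IsPCRep (stepF (z k) a) (z k) a ∧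
        ∀ i, i ≠ 0 → i ≠ Fin.last m → z k i ∈ X k := by
  have hpoint (i : Fin (m + 1)) : ∃ ζ : ℕ → ℝ, Tendsto ζ atTop (nhds (x i)) ∧
      ∀ᶠ k in atTop, if i = 0 ∨ i = Fin.last m then ζ k = x i else ζ k ∈ X k := by
    by_cases hi : i = 0 ∨ i = Fin.last m
    · exact ⟨fun _ => x i, tendsto_const_nhds, .of_forall fun _ => by rw [if_pos hi]⟩
    · simpa only [hi, if_false] using hX.exists_tendsto (hrep.isWeakPCRep.mem_Icc i)
  choose ζ hζ hζX using hpoint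
  have hstrict : ∀ᶠ k in atTop, ∀ i : Fin m, ζ i.castSucc k < ζ i.succ k :=
    eventually_all.2 fun i => (hζ _).eventually_lt (hζ _) (hrep.1 i.castSucc_lt_succ)
  refine ⟨fun k i => ζ i k, tendsto_pi_nhds.2 hζ, ?_⟩
  filter_upwards [hstrict, eventually_all.2 hζX] with k hk hkX
  have h₀ := hkX 0
  have h₁ := hkX (Fin.last m)
  rw [if_pos (.inl rfl), hrep.2.1] at h₀
  rw [if_pos (.inr rfl), hrep.2.2.1] at h₁
  refine ⟨⟨Fin.strictMono_iff_lt_succ.2 hk, h₀, h₁, .of_forall fun _ => rfl⟩, fun i hi hi' => ?_⟩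
  simpa only [hi, hi', or_self, if_false] using hkX i

lemma abs_stepF_le (x : Fin (m + 1) → ℝ) (a : Fin m → ℝ) (t : ℝ) : |stepF x a t| ≤ ∑ l, |a l| :=
  (Finset.abs_sum_le_sum_abs _ _).trans <| Finset.sum_le_sum fun l _ =>
    norm_indicator_le_norm_self (fun _ => a l) t

lemma tendsto_L1dist_stepF {z : ℕ → Fin (m + 1) → ℝ} (hz : Tendsto z atTop (nhds x))
    (a : Fin m → ℝ) :
    Tendsto (fun k => L1dist (stepF (z k) a) (stepF x a)) atTop (nhds 0) := by
  have hint (k : ℕ) := ((integrable_stepF (z k) a).sub (integrable_stepF x a)).abs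
  have hbound (k : ℕ) (t : ℝ) : ‖|stepF (z k) a t - stepF x a t|‖ ≤ ∑ l, |a l| + ∑ l, |a l| := by
    rw [Real.norm_eq_abs, abs_abs]
    exact (abs_sub _ _).trans (add_le_add (abs_stepF_le _ a t) (abs_stepF_le x a t))
  have hlim : ∀ᵐ t ∂mu01,
      Tendsto (fun k => |stepF (z k) a t - stepF x a t|) atTop (nhds 0) := by
    filter_upwards [ae_tendsto_stepF hz fun l _ => tendsto_const_nhds (x := a l)] with t ht
    simpa only [sub_self, abs_zero] using (ht.sub_const (stepF x a t)).abs
  rw [← integral_zero ℝ ℝ (μ := mu01)]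
  exact tendsto_integral_of_dominated_convergence _ (fun k => (hint k).aestronglyMeasurable)
    (integrable_const _) (fun k => .of_forall (hbound k)) hlim

theorem exists_recovery_isPCIn (hX : AsymptoticallyDense X) (hu : IsPC u) :
    ∃ useq : ℕ → ℝ → ℝ, (∀ k, Integrable (useq k) mu01) ∧
      Tendsto (fun k => L1dist (useq k) u) atTop (nhds 0) ∧
      ∀ᶠ k in atTop, IsPCIn (useq k) (X k) ∧ jumps (useq k) ≤ jumps u := by
  obtain ⟨x, a, hrep⟩ := hu.exists_isPCRep_jumps
  obtain ⟨z, hz, hzX⟩ := exists_partitions_tendsto hX hrep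
  refine ⟨fun k => stepF (z k) a, fun k => integrable_stepF _ _, ?_, hzX.mono fun k hk => ?_⟩
  · simpa only [L1dist_congr_ae .rfl hrep.2.2.2] using tendsto_L1dist_stepF hz a
  · exact ⟨⟨_, z k, a, hk⟩, Nat.lt_succ_iff.1 hk.1.isWeakPCRep.jumps_lt⟩

theorem exists_recovery_potts {γ : ℝ} {f : ℝ → ℝ} {fseq : ℕ → ℝ → ℝ} (hγ : 0 ≤ γ)
    (hX : AsymptoticallyDense X) (hf : Integrable f mu01) (hfs : ∀ k, Integrable (fseq k) mu01)
    (hflim : Tendsto (fun k => L1dist (fseq k) f) atTop (nhds 0)) (hu : Integrable u mu01) :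
    ∃ useq : ℕ → ℝ → ℝ, (∀ k, Integrable (useq k) mu01) ∧
      Tendsto (fun k => L1dist (useq k) u) atTop (nhds 0) ∧
      limsup (fun k => PottsIn γ (fseq k) (X k) (useq k)) atTop ≤ Potts γ f u := by
  by_cases hPC : IsPC u
  · obtain ⟨useq, hus, hlim, hPCIn⟩ := exists_recovery_isPCIn hX hPC
    refine ⟨useq, hus, hlim, ?_⟩
    have hbound : ∀ᶠ k in atTop, PottsIn γ (fseq k) (X k) (useq k) ≤
        ENNReal.ofReal (γ * jumps u + L1dist (useq k) (fseq k)) := by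
      filter_upwards [hPCIn] with k ⟨hk, hjumps⟩
      have hnonneg := L1dist_nonneg (useq k) (fseq k)
      refine (pottsIn_le_ofReal_iff (by positivity)).2 ⟨hk, ?_⟩
      gcongr
    have henergy := ENNReal.tendsto_ofReal
      ((tendsto_L1dist hu hf hus hfs hlim hflim).const_add (γ * jumps u))
    rw [Potts, if_pos hPC, ← henergy.limsup_eq]
    exact limsup_le_limsup hbound
  · refine ⟨fun _ => u, fun _ => hu, by simp [L1dist], ?_⟩
    rw [Potts, if_neg hPC]
    exact le_top

end Recovery

section TailDomination

variable {α : Type*} [MeasurableSpace α] {μ : Measure α}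

lemma integral_abs_indicator_le_two_mul {u f : α → ℝ} (hu : Integrable u μ) (hf : Integrable f μ)
    {s : Set α} (hs : NullMeasurableSet s μ)
    (h : ∫ t, |u t - f t| ∂μ ≤ ∫ t, |sᶜ.indicator u t - f t| ∂μ) :
    ∫ t, |s.indicator u t| ∂μ ≤ 2 * ∫ t, |s.indicator f t| ∂μ := by
  have hpointwise (t : α) : |s.indicator u t| ≤
      |u t - f t| - |sᶜ.indicator u t - f t| + 2 * |s.indicator f t| := by
    by_cases ht : t ∈ s
    · rw [indicator_of_mem ht, indicator_of_mem ht, indicator_of_notMem (notMem_compl_iff.2 ht),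
        zero_sub, abs_neg]
      linarith [abs_add_le (u t - f t) (f t), congrArg abs (sub_add_cancel (u t) (f t))]
    · simp [ht]
  have hdist : Integrable (fun t => |u t - f t|) μ := (hu.sub hf).abs
  have htrunc : Integrable (fun t => |sᶜ.indicator u t - f t|) μ :=
    ((hu.indicator₀ hs.compl).sub hf).abs
  have hdiff : Integrable (fun t => |u t - f t| - |sᶜ.indicator u t - f t|) μ := hdist.sub htrunc
  have htail : Integrable (fun t => 2 * |s.indicator f t|) μ := (hf.indicator₀ hs).abs.const_mul 2
  calc ∫ t, |s.indicator u t| ∂μ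
      ≤ ∫ t, |u t - f t| - |sᶜ.indicator u t - f t| + 2 * |s.indicator f t| ∂μ :=
        integral_mono (hu.indicator₀ hs).abs (hdiff.add htail) hpointwise
    _ = ∫ t, |u t - f t| ∂μ - ∫ t, |sᶜ.indicator u t - f t| ∂μ
          + 2 * ∫ t, |s.indicator f t| ∂μ := by
        rw [← integral_sub hdist htrunc, ← integral_const_mul, ← integral_add hdiff htail]
    _ ≤ 2 * ∫ t, |s.indicator f t| ∂μ := by linarith

lemma exists_forall_measure_le_of_eLpNorm_le {ι β : Type*} [NormedAddCommGroup β] {u : ι → α → β}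
    {B : NNReal} (hu : ∀ k, AEStronglyMeasurable (u k) μ) (hB : ∀ k, eLpNorm (u k) 1 μ ≤ B)
    {δ : ℝ} (hδ : 0 < δ) :
    ∃ C : NNReal, ∀ k, μ {t | C ≤ ‖u k t‖₊} ≤ ENNReal.ofReal δ := by
  have hδ' : δ.toNNReal ≠ 0 := pos_iff_ne_zero.1 (Real.toNNReal_pos.2 hδ)
  -- The summand `1` keeps the threshold positive when `B = 0`.
  let C : NNReal := (B + 1) / δ.toNNReal
  have hC : C ≠ 0 := div_ne_zero (by positivity) hδ'
  refine ⟨C, fun k => ?_⟩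
  calc μ {t | C ≤ ‖u k t‖₊}
      = μ {t | (C : ℝ≥0∞) ≤ ‖u k t‖ₑ} := by simp only [enorm, ENNReal.coe_le_coe]
    _ ≤ (∫⁻ t, ‖u k t‖ₑ ∂μ) / C :=
        meas_ge_le_lintegral_div (hu k).enorm (ENNReal.coe_ne_zero.2 hC) ENNReal.coe_ne_top
    _ ≤ B / C := by
        rw [← eLpNorm_one_eq_lintegral_enorm]
        exact ENNReal.div_le_div_right (hB k) _
    _ ≤ ENNReal.ofReal δ := by
        rw [← ENNReal.coe_div hC, ENNReal.ofReal, ENNReal.coe_le_coe]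
        refine NNReal.div_le_of_le_mul ?_
        rw [mul_div_cancel₀ _ hδ']
        exact le_self_add

theorem uniformIntegrable_of_eLpNorm_tail_le [IsFiniteMeasure μ] {ι β : Type*}
    [NormedAddCommGroup β] {u f : ι → α → β} {K : NNReal} (hf : UniformIntegrable f 1 μ)
    (hu : ∀ k, AEStronglyMeasurable (u k) μ)
    (htail : ∀ k (C : NNReal), eLpNorm ({t | C ≤ ‖u k t‖₊}.indicator (u k)) 1 μ ≤
      K * eLpNorm ({t | C ≤ ‖u k t‖₊}.indicator (f k)) 1 μ) :
    UniformIntegrable u 1 μ := by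
  obtain ⟨-, hunif, B, hB⟩ := hf
  have hnorm (k : ι) : eLpNorm (u k) 1 μ ≤ K * B := by
    have h := htail k 0
    simp only [zero_le, ofPred_true, indicator_univ] at h
    exact h.trans (mul_le_mul_right (hB k) _)
  refine uniformIntegrable_of le_rfl ENNReal.one_ne_top hu fun ε hε => ?_
  obtain ⟨δ, hδ, hsmall⟩ := hunif (ε := ε / (K + 1)) (by positivity)
  obtain ⟨C, hC⟩ : ∃ C : NNReal, ∀ k, μ {t | C ≤ ‖u k t‖₊} ≤ ENNReal.ofReal δ :=
    exists_forall_measure_le_of_eLpNorm_le hu hnorm hδ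
  refine ⟨C, fun k => (htail k C).trans ?_⟩
  have hset : eLpNorm ({t | C ≤ ‖u k t‖₊}.indicator (f k)) 1 μ ≤ ENNReal.ofReal (ε / (K + 1)) :=
    (eLpNorm_mono_enorm fun t => enorm_indicator_le_of_subset (subset_toMeasurable μ _) _ t).trans
      (hsmall k _ (measurableSet_toMeasurable μ _) ((measure_toMeasurable _).trans_le (hC k)))
  calc K * eLpNorm ({t | C ≤ ‖u k t‖₊}.indicator (f k)) 1 μ
      ≤ ENNReal.ofReal K * ENNReal.ofReal (ε / (K + 1)) := by
        rw [ENNReal.ofReal_coe_nnreal]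
        exact mul_le_mul_right hset _
    _ = ENNReal.ofReal (K * (ε / (K + 1))) := (ENNReal.ofReal_mul K.coe_nonneg).symm
    _ ≤ ENNReal.ofReal ε := by
        refine ENNReal.ofReal_le_ofReal ?_
        rw [mul_div_left_comm]
        exact mul_le_of_le_one_right hε.le ((div_le_one (by positivity)).2 (by linarith))

end TailDomination

section Minimizers

variable {γ : ℝ} {f u : ℝ → ℝ} {S : Set ℝ} {X : ℕ → Set ℝ} {fseq useq : ℕ → ℝ → ℝ}

lemma isPCIn_and_energy_le_of_minimizer (hmin : ∀ v, PottsIn γ f S u ≤ PottsIn γ f S v) :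
    IsPCIn u S ∧ γ * jumps u + L1dist u f ≤ L1dist (fun _ => 0) f := by
  have hzero : PottsIn γ f S (fun _ => 0) ≤ ENNReal.ofReal (L1dist (fun _ => 0) f) :=
    (pottsIn_le_ofReal_iff (L1dist_nonneg _ _)).2 ⟨isPCIn_zero S, by simp [jumps_zero]⟩
  exact (pottsIn_le_ofReal_iff (L1dist_nonneg _ _)).1 ((hmin _).trans hzero)

lemma integrable_of_minimizer (hmin : ∀ v, PottsIn γ f S u ≤ PottsIn γ f S v) :
    Integrable u mu01 :=
  (isPCIn_and_energy_le_of_minimizer hmin).1.isPC.integrable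

lemma L1dist_le_L1dist_comp_of_minimizer (hγ : 0 ≤ γ)
    (hmin : ∀ v, PottsIn γ f S u ≤ PottsIn γ f S v) {g : ℝ → ℝ} (hg : g 0 = 0) :
    L1dist u f ≤ L1dist (g ∘ u) f := by
  have hu := (isPCIn_and_energy_le_of_minimizer hmin).1
  have hnonneg : 0 ≤ γ * jumps u + L1dist (g ∘ u) f :=
    add_nonneg (by positivity) (L1dist_nonneg _ _)
  have hcomp : γ * jumps (g ∘ u) + L1dist (g ∘ u) f ≤ γ * jumps u + L1dist (g ∘ u) f := by
    gcongr
    exact hu.isPC.jumps_comp_le hg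
  have hle := (pottsIn_le_ofReal_iff hnonneg).1 <|
    (hmin (g ∘ u)).trans ((pottsIn_le_ofReal_iff hnonneg).2 ⟨hu.comp hg, hcomp⟩)
  linarith [hle.2]

-- Setting the large values to zero creates no jump, so it cannot lower the data term.
lemma eLpNorm_tail_le_of_minimizer (hγ : 0 ≤ γ) (hf : Integrable f mu01)
    (hmin : ∀ v, PottsIn γ f S u ≤ PottsIn γ f S v) (C : NNReal) :
    eLpNorm ({t | C ≤ ‖u t‖₊}.indicator u) 1 mu01 ≤
      (2 : NNReal) * eLpNorm ({t | C ≤ ‖u t‖₊}.indicator f) 1 mu01 := by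
  have hu := integrable_of_minimizer hmin
  have hs : NullMeasurableSet {t | C ≤ ‖u t‖₊} mu01 :=
    nullMeasurableSet_le aemeasurable_const hu.aestronglyMeasurable.aemeasurable.nnnorm
  let truncate (y : ℝ) : ℝ := if C ≤ ‖y‖₊ then 0 else y
  have htruncate : truncate ∘ u = {t | C ≤ ‖u t‖₊}ᶜ.indicator u := by
    ext t
    simp only [Function.comp_apply, truncate, indicator_apply, mem_compl_iff, mem_ofPred_eq,
      ite_not]
  have hcompare := L1dist_le_L1dist_comp_of_minimizer hγ hmin (g := truncate) (ite_self 0)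
  rw [htruncate] at hcompare
  rw [eLpNorm_one_eq_ofReal_integral_abs (hu.indicator₀ hs),
    eLpNorm_one_eq_ofReal_integral_abs (hf.indicator₀ hs), ← ENNReal.ofReal_coe_nnreal,
    ← ENNReal.ofReal_mul (NNReal.coe_nonneg _)]
  exact ENNReal.ofReal_le_ofReal (integral_abs_indicator_le_two_mul hu hf hs hcompare)

theorem uniformIntegrable_of_minimizers (hγ : 0 ≤ γ) (hfs : UniformIntegrable fseq 1 mu01)
    (hmin : ∀ k v, PottsIn γ (fseq k) (X k) (useq k) ≤ PottsIn γ (fseq k) (X k) v) :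
    UniformIntegrable useq 1 mu01 :=
  uniformIntegrable_of_eLpNorm_tail_le hfs
    (fun k => (integrable_of_minimizer (hmin k)).aestronglyMeasurable)
    fun k => eLpNorm_tail_le_of_minimizer hγ (memLp_one_iff_integrable.1 (hfs.memLp k)) (hmin k)

theorem exists_subseq_tendsto_of_minimizers (hγ : 0 < γ) (hfs : UniformIntegrable fseq 1 mu01)
    (hmin : ∀ k v, PottsIn γ (fseq k) (X k) (useq k) ≤ PottsIn γ (fseq k) (X k) v) :
    ∃ (u : ℝ → ℝ) (φ : ℕ → ℕ), Integrable u mu01 ∧ StrictMono φ ∧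
      Tendsto (fun k => L1dist (useq (φ k)) u) atTop (nhds 0) := by
  obtain ⟨B, hB⟩ := exists_forall_integral_abs_le hfs
  have hjumps (k : ℕ) : IsPC (useq k) ∧ jumps (useq k) ≤ ⌊B / γ⌋₊ := by
    obtain ⟨hPC, hle⟩ := isPCIn_and_energy_le_of_minimizer (hmin k)
    have hzero : L1dist (fun _ => 0) (fseq k) ≤ B := by
      simpa only [L1dist, zero_sub, abs_neg] using hB k
    refine ⟨hPC.isPC, Nat.le_floor ((le_div_iff₀ hγ).2 ?_)⟩
    linarith [L1dist_nonneg (useq k) (fseq k)]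
  obtain ⟨φ, u, hφ, hu, -, hlim⟩ := exists_subseq_tendsto_of_jumps_le
    (Frequently.of_forall hjumps) (uniformIntegrable_of_minimizers hγ.le hfs hmin)
  exact ⟨u, φ, hu.integrable, hφ, hlim⟩

theorem potts_le_of_tendsto_minimizers (hγ : 0 < γ) (hX : AsymptoticallyDense X)
    (hf : Integrable f mu01) (hfs : ∀ k, Integrable (fseq k) mu01)
    (hflim : Tendsto (fun k => L1dist (fseq k) f) atTop (nhds 0))
    (hmin : ∀ k v, PottsIn γ (fseq k) (X k) (useq k) ≤ PottsIn γ (fseq k) (X k) v)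
    (hu : Integrable u mu01) (hulim : Tendsto (fun k => L1dist (useq k) u) atTop (nhds 0))
    {v : ℝ → ℝ} (hv : Integrable v mu01) : Potts γ f u ≤ Potts γ f v := by
  obtain ⟨vseq, -, -, hlimsup⟩ := exists_recovery_potts hγ.le hX hf hfs hflim hv
  calc Potts γ f u
      ≤ liminf (fun k => PottsIn γ (fseq k) (X k) (useq k)) atTop :=
        potts_le_liminf hγ X hf hfs hflim hu (fun k => integrable_of_minimizer (hmin k)) hulim
    _ ≤ liminf (fun k => PottsIn γ (fseq k) (X k) (vseq k)) atTop :=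
        liminf_le_liminf (.of_forall fun k => hmin k (vseq k))
    _ ≤ limsup (fun k => PottsIn γ (fseq k) (X k) (vseq k)) atTop := liminf_le_limsup
    _ ≤ Potts γ f v := hlimsup

end Minimizers

/-- The open interval `(a, b)` is a cell of the grid `X`: its endpoints are consecutive points of
`{0, 1} ∪ X`. These are the intervals on which the sampling conditions prescribe a constant. -/
def IsCell (X : Set ℝ) (a b : ℝ) : Prop :=
  a ∈ insert (0 : ℝ) (insert 1 X) ∧ b ∈ insert (0 : ℝ) (insert 1 X) ∧ a < b ∧ Ioo a b ∩ X = ∅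

section Cells

variable {X : Set ℝ} {a b : ℝ}

lemma rel_of_consecutive_of_finite {α : Type*} [LinearOrder α] {S : Set α} (hS : S.Finite)
    {r : α → α → Prop} (htrans : ∀ a b c, r a b → r b c → r a c)
    (hr : ∀ a ∈ S, ∀ b ∈ S, a < b → Ioo a b ∩ S = ∅ → r a b) {a b : α} (ha : a ∈ S) (hb : b ∈ S)
    (hab : a < b) : r a b := by
  have := hS.fintype
  let _ : LocallyFiniteOrder S := Fintype.toLocallyFiniteOrder
  have : IsTrans S fun p q => r p q := ⟨fun p q s => htrans p q s⟩
  have hchain : Relation.TransGen (· ⋖ ·) (⟨a, ha⟩ : S) ⟨b, hb⟩ := lt_iff_transGen_covBy.1 hab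
  refine Relation.transGen_minimal (r' := fun p q : S => r p q) (fun p q hpq => ?_) _ _ hchain
  refine hr p p.2 q q.2 hpq.1 (eq_empty_of_forall_notMem fun t ht => ?_)
  exact hpq.2 (c := ⟨t, ht.2⟩) ht.1.1 ht.1.2

lemma rel_zero_one_of_isCell (hX : X.Finite) {r : ℝ → ℝ → Prop}
    (htrans : ∀ a b c, r a b → r b c → r a c) (hr : ∀ a b, IsCell X a b → r a b) : r 0 1 := by
  refine rel_of_consecutive_of_finite ((hX.insert 1).insert 0) htrans (fun a ha b hb hab hE => ?_)
    (by simp) (by simp) zero_lt_one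
  refine hr a b ⟨ha, hb, hab, subset_empty_iff.1 (hE ▸ ?_)⟩
  exact inter_subset_inter_right _ ((subset_insert _ _).trans (subset_insert _ _))

lemma IsCell.Icc_subset (h : IsCell X a b) (hX : X ⊆ Icc 0 1) : Icc a b ⊆ Icc 0 1 := by
  have hgrid : insert (0 : ℝ) (insert 1 X) ⊆ Icc 0 1 :=
    insert_subset (left_mem_Icc.2 zero_le_one) (insert_subset (right_mem_Icc.2 zero_le_one) hX)
  exact Icc_subset_Icc (hgrid h.1).1 (hgrid h.2.1).2

lemma IsCell.length_lt {δ : ℝ} (h : IsCell X a b) (hX : X ⊆ Icc 0 1)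
    (hδ : Icc 0 1 ⊆ Metric.thickening (δ / 2) X) : b - a < δ := by
  obtain ⟨-, -, hab, hempty⟩ := id h
  by_contra! hle
  have hmid : (a + b) / 2 ∈ Icc a b := ⟨by linarith, by linarith⟩
  obtain ⟨x, hx, hdist⟩ := Metric.mem_thickening_iff.1 (hδ (h.Icc_subset hX hmid))
  rw [Real.dist_eq, abs_lt] at hdist
  have hmem : x ∈ Ioo a b ∩ X := ⟨⟨by linarith [hdist.2], by linarith [hdist.1]⟩, hx⟩
  rwa [hempty] at hmem

lemma integrable_mu01_iff {u : ℝ → ℝ} : Integrable u mu01 ↔ IntervalIntegrable u volume 0 1 :=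
  (intervalIntegrable_iff_integrableOn_Icc_of_le zero_le_one).symm

lemma integral_mu01 (u : ℝ → ℝ) : ∫ t, u t ∂mu01 = ∫ t in (0 : ℝ)..1, u t := by
  rw [mu01, integral_Icc_eq_integral_Ioc, intervalIntegral.integral_of_le zero_le_one]

lemma IsCell.intervalIntegrable {u : ℝ → ℝ} (h : IsCell X a b) (hX : X ⊆ Icc 0 1)
    (hu : Integrable u mu01) : IntervalIntegrable u volume a b := by
  refine (integrable_mu01_iff.1 hu).mono_set ?_
  rw [uIcc_of_le h.2.2.1.le, uIcc_of_le zero_le_one]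
  exact h.Icc_subset hX

lemma integral_mu01_le_of_isCell (hXfin : X.Finite) (hX : X ⊆ Icc 0 1) {F G : ℝ → ℝ}
    (hF : Integrable F mu01) (hG : Integrable G mu01)
    (hcell : ∀ a b, IsCell X a b → ∫ t in a..b, F t ≤ ∫ t in a..b, G t) :
    ∫ t, F t ∂mu01 ≤ ∫ t, G t ∂mu01 := by
  have hchain := rel_zero_one_of_isCell hXfin
    (r := fun a b => IntervalIntegrable F volume a b ∧ IntervalIntegrable G volume a b ∧
      ∫ t in a..b, F t ≤ ∫ t in a..b, G t)
    (fun a b c ⟨hF₁, hG₁, h₁⟩ ⟨hF₂, hG₂, h₂⟩ => ⟨hF₁.trans hF₂, hG₁.trans hG₂, by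
      rw [← intervalIntegral.integral_add_adjacent_intervals hF₁ hF₂,
        ← intervalIntegral.integral_add_adjacent_intervals hG₁ hG₂]
      exact add_le_add h₁ h₂⟩)
    fun a b h => ⟨h.intervalIntegrable hX hF, h.intervalIntegrable hX hG, hcell a b h⟩
  simpa only [integral_mu01] using hchain.2.2

lemma integrable_of_forall_isCell_eqOn_const (hX : X.Finite) {v : ℝ → ℝ}
    (hv : ∀ a b, IsCell X a b → ∃ c, EqOn v (fun _ => c) (Ioo a b)) : Integrable v mu01 := by
  refine integrable_mu01_iff.2 <| rel_zero_one_of_isCell hX (r := IntervalIntegrable v volume)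
    (fun _ _ _ => IntervalIntegrable.trans) fun a b h => ?_
  obtain ⟨c, hc⟩ := hv a b h
  rw [intervalIntegrable_iff_integrableOn_Ioo_of_le h.2.2.1.le]
  exact (integrableOn_const (C := c) (by simp)).congr_fun hc.symm measurableSet_Ioo

end Cells

section Sampling

variable {f g : ℝ → ℝ} {X : ℕ → Set ℝ} {fseq : ℕ → ℝ → ℝ}

lemma AsymptoticallyDense.eventually_forall_isCell_abs_sub_le (hX : AsymptoticallyDense X)
    (hXsub : ∀ k, X k ⊆ Icc 0 1) (hg : ContinuousOn g (Icc 0 1)) {ε : ℝ} (hε : 0 < ε) :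
    ∀ᶠ k in atTop, ∀ a b, IsCell (X k) a b → ∀ s ∈ Icc a b, ∀ t ∈ Icc a b, |g s - g t| ≤ ε := by
  obtain ⟨δ, hδ, hgδ⟩ := Metric.uniformContinuousOn_iff.1
    (isCompact_Icc.uniformContinuousOn_of_continuous hg) ε hε
  filter_upwards [hX (δ / 2) (half_pos hδ)] with k hk a b hab s hs t ht
  have hsub := hab.Icc_subset (hXsub k)
  exact (hgδ s (hsub hs) t (hsub ht)
    ((Real.dist_le_of_mem_Icc hs ht).trans_lt (hab.length_lt (hXsub k) hk))).le

lemma integral_abs_average_sub_le {a b : ℝ} (hab : a < b) (hf : IntervalIntegrable f volume a b)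
    (c : ℝ) :
    ∫ t in a..b, |(b - a)⁻¹ * (∫ s in a..b, f s) - f t| ≤ 2 * ∫ t in a..b, |f t - c| := by
  have hba : 0 < b - a := sub_pos.2 hab
  have hfc : IntervalIntegrable (fun t => |f t - c|) volume a b :=
    (hf.sub intervalIntegrable_const).abs
  set A := (b - a)⁻¹ * ∫ s in a..b, f s with hA
  have hmean : (b - a) * |A - c| ≤ ∫ t in a..b, |f t - c| :=
    calc (b - a) * |A - c| = |∫ t in a..b, (f t - c)| := by
          rw [intervalIntegral.integral_sub hf intervalIntegrable_const,
            intervalIntegral.integral_const, smul_eq_mul, ← abs_of_pos hba, ← abs_mul,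
            abs_of_pos hba, mul_sub, hA, mul_inv_cancel_left₀ hba.ne']
      _ ≤ ∫ t in a..b, |f t - c| := intervalIntegral.abs_integral_le_integral_abs hab.le
  calc ∫ t in a..b, |A - f t|
      ≤ ∫ t in a..b, (|A - c| + |f t - c|) := by
        refine intervalIntegral.integral_mono_on hab.le (intervalIntegrable_const.sub hf).abs
          (intervalIntegrable_const.add hfc) fun t _ => ?_
        exact abs_sub_comm c (f t) ▸ abs_sub_le A c (f t)
    _ = (b - a) * |A - c| + ∫ t in a..b, |f t - c| := by
        rw [intervalIntegral.integral_add intervalIntegrable_const hfc,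
          intervalIntegral.integral_const, smul_eq_mul]
    _ ≤ 2 * ∫ t in a..b, |f t - c| := by linarith

lemma integral_abs_average_sub_le_of_abs_sub_le {a b ε : ℝ} (hab : a < b)
    (hf : IntervalIntegrable f volume a b) (hg : IntervalIntegrable g volume a b)
    (hosc : ∀ s ∈ Icc a b, ∀ t ∈ Icc a b, |g s - g t| ≤ ε) :
    ∫ t in a..b, |(b - a)⁻¹ * (∫ s in a..b, f s) - f t| ≤
      ∫ t in a..b, 2 * (|f t - g t| + ε) := by
  refine (integral_abs_average_sub_le hab hf (g a)).trans ?_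
  rw [intervalIntegral.integral_const_mul]
  gcongr
  refine intervalIntegral.integral_mono_on hab.le (hf.sub intervalIntegrable_const).abs
    ((hf.sub hg).abs.add intervalIntegrable_const) fun t ht => ?_
  exact (abs_sub_le _ (g t) _).trans
    (add_le_add_right (hosc t ht a (left_mem_Icc.2 hab.le)) _)

lemma integrable_of_integralSampled {X : Set ℝ} {v : ℝ → ℝ} (hX : X.Finite)
    (hv : IntegralSampled X f v) : Integrable v mu01 :=
  integrable_of_forall_isCell_eqOn_const hX fun a b ⟨ha, hb, hab, hE⟩ => ⟨_, hv a b ha hb hab hE⟩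

lemma integrable_of_pointSampled {X : Set ℝ} {v : ℝ → ℝ} (hX : X.Finite)
    (hv : PointSampled X f v) : Integrable v mu01 :=
  integrable_of_forall_isCell_eqOn_const hX fun a b ⟨ha, hb, hab, hE⟩ => ⟨_, hv a b ha hb hab hE⟩

lemma L1dist_le_of_integralSampled {X : Set ℝ} {v : ℝ → ℝ} {ε : ℝ} (hXfin : X.Finite)
    (hX : X ⊆ Icc 0 1) (hf : Integrable f mu01) (hg : Integrable g mu01)
    (hosc : ∀ a b, IsCell X a b → ∀ s ∈ Icc a b, ∀ t ∈ Icc a b, |g s - g t| ≤ ε)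
    (hv : IntegralSampled X f v) : L1dist v f ≤ 2 * (L1dist f g + ε) := by
  have hvint := integrable_of_integralSampled hXfin hv
  have hfg : Integrable (fun t => |f t - g t|) mu01 := (hf.sub hg).abs
  calc L1dist v f
      ≤ ∫ t, 2 * (|f t - g t| + ε) ∂mu01 := by
        refine integral_mu01_le_of_isCell hXfin hX (hvint.sub hf).abs
          ((hfg.add (integrable_const ε)).const_mul 2) fun a b h => ?_
        obtain ⟨ha, hb, hab, hempty⟩ := id h
        refine le_of_eq_of_le (intervalIntegral.integral_congr_Ioo_of_le hab.le fun t ht => ?_)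
          (integral_abs_average_sub_le_of_abs_sub_le hab (h.intervalIntegrable hX hf)
            (h.intervalIntegrable hX hg) (hosc a b h))
        simp only [hv a b ha hb hab hempty t ht,
          intervalIntegral.integral_of_le hab.le, integral_Ioc_eq_integral_Ioo]
    _ = 2 * (L1dist f g + ε) := by
        rw [integral_const_mul, integral_add hfg (integrable_const ε), integral_mu01 fun _ => ε,
          intervalIntegral.integral_const, sub_zero, one_smul, L1dist]

lemma L1dist_le_of_pointSampled {X : Set ℝ} {v : ℝ → ℝ} {ε : ℝ} (hXfin : X.Finite)
    (hX : X ⊆ Icc 0 1) (hf : Integrable f mu01)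
    (hosc : ∀ a b, IsCell X a b → ∀ s ∈ Icc a b, ∀ t ∈ Icc a b, |f s - f t| ≤ ε)
    (hv : PointSampled X f v) : L1dist v f ≤ ε := by
  have hvint := integrable_of_pointSampled hXfin hv
  calc L1dist v f
      ≤ ∫ _, ε ∂mu01 := by
        refine integral_mu01_le_of_isCell hXfin hX (hvint.sub hf).abs (integrable_const ε)
          fun a b h => ?_
        have hab := h.2.2.1
        refine intervalIntegral.integral_mono_on_of_le_Ioo hab.le
          (h.intervalIntegrable hX (hvint.sub hf).abs) intervalIntegrable_const fun t ht => ?_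
        rw [hv a b h.1 h.2.1 hab h.2.2.2 t ht]
        exact hosc a b h _ ⟨by linarith, by linarith⟩ t (Ioo_subset_Icc_self ht)
    _ = ε := by
        rw [integral_mu01 fun _ => ε, intervalIntegral.integral_const, sub_zero, one_smul]

theorem tendsto_L1dist_of_integralSampled (hf : Integrable f mu01) (hX : AsymptoticallyDense X)
    (hXfin : ∀ k, (X k).Finite) (hXsub : ∀ k, X k ⊆ Icc 0 1)
    (hfs : ∀ k, IntegralSampled (X k) f (fseq k)) :
    Tendsto (fun k => L1dist (fseq k) f) atTop (nhds 0) := by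
  refine tendsto_order.2 ⟨fun b hb => .of_forall fun k => hb.trans_le (L1dist_nonneg _ _),
    fun ε hε => ?_⟩
  have : mu01.Regular := by
    unfold mu01
    infer_instance
  obtain ⟨g, -, hfg, hgc, hg⟩ := hf.exists_hasCompactSupport_integral_sub_le (ε := ε / 5)
    (by positivity)
  have hfg' : L1dist f g ≤ ε / 5 := hfg
  filter_upwards [hX.eventually_forall_isCell_abs_sub_le hXsub hgc.continuousOn
    (show 0 < ε / 5 by positivity)] with k hk
  linarith [L1dist_le_of_integralSampled (hXfin k) (hXsub k) hf hg hk (hfs k)]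

theorem tendsto_L1dist_of_pointSampled (hf : ContinuousOn f (Icc 0 1)) (hX : AsymptoticallyDense X)
    (hXfin : ∀ k, (X k).Finite) (hXsub : ∀ k, X k ⊆ Icc 0 1)
    (hfs : ∀ k, PointSampled (X k) f (fseq k)) :
    Tendsto (fun k => L1dist (fseq k) f) atTop (nhds 0) := by
  refine tendsto_order.2 ⟨fun b hb => .of_forall fun k => hb.trans_le (L1dist_nonneg _ _),
    fun ε hε => ?_⟩
  filter_upwards [hX.eventually_forall_isCell_abs_sub_le hXsub hf (half_pos hε)] with k hk
  exact (L1dist_le_of_pointSampled (hXfin k) (hXsub k) hf.integrableOn_Icc hk (hfs k)).trans_lt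
    (half_lt_self hε)

end Sampling

theorem statement_3_general
    (f : ℝ → ℝ) (hf : IntegrableOn f (Set.Icc 0 1)) (γ : ℝ) (hγ : 0 < γ)
    (X : ℕ → Set ℝ) (hX : AsymptoticallyDense X)
    (fseq : ℕ → ℝ → ℝ) (hfs : ∀ k, IntegrableOn (fseq k) (Set.Icc 0 1))
    (hflim : Tendsto (fun k => L1dist (fseq k) f) atTop (nhds 0)) :
    (∀ u : ℝ → ℝ, IntegrableOn u (Set.Icc 0 1) →
      ∀ useq : ℕ → ℝ → ℝ, (∀ k, IntegrableOn (useq k) (Set.Icc 0 1)) →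
        Tendsto (fun k => L1dist (useq k) u) atTop (nhds 0) →
        Potts γ f u ≤ liminf (fun k => PottsIn γ (fseq k) (X k) (useq k)) atTop) ∧
    (∀ u : ℝ → ℝ, IntegrableOn u (Set.Icc 0 1) →
      ∃ useq : ℕ → ℝ → ℝ, (∀ k, IntegrableOn (useq k) (Set.Icc 0 1)) ∧
        Tendsto (fun k => L1dist (useq k) u) atTop (nhds 0) ∧
        limsup (fun k => PottsIn γ (fseq k) (X k) (useq k)) atTop ≤ Potts γ f u) ∧
    (∀ useq : ℕ → ℝ → ℝ,
      (∀ k, ∀ v : ℝ → ℝ, PottsIn γ (fseq k) (X k) (useq k) ≤ PottsIn γ (fseq k) (X k) v) →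
      (∃ (u : ℝ → ℝ) (φ : ℕ → ℕ), IntegrableOn u (Set.Icc 0 1) ∧ StrictMono φ ∧
        Tendsto (fun i => L1dist (useq (φ i)) u) atTop (nhds 0)) ∧
      (∀ (u : ℝ → ℝ) (φ : ℕ → ℕ), IntegrableOn u (Set.Icc 0 1) → StrictMono φ →
        Tendsto (fun i => L1dist (useq (φ i)) u) atTop (nhds 0) →
        Potts γ f u = ⨅ (v : ℝ → ℝ) (_ : IntegrableOn v (Set.Icc 0 1)), Potts γ f v)) := by
  refine ⟨fun u hu useq hus => potts_le_liminf hγ X hf hfs hflim hu hus,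
    fun u hu => exists_recovery_potts hγ.le hX hf hfs hflim hu, fun useq hmin => ⟨?_, ?_⟩⟩
  · exact exists_subseq_tendsto_of_minimizers hγ
      (uniformIntegrable_of_tendsto_L1dist hf hfs hflim) hmin
  · intro u φ hu hφ hulim
    refine le_antisymm (le_iInf₂ fun v hv => ?_) (iInf₂_le u hu)
    exact potts_le_of_tendsto_minimizers hγ (hX.comp hφ) hf (fun k => hfs (φ k))
      (hflim.comp hφ.tendsto_atTop) (fun k => hmin (φ k)) hu hulim hv

theorem statement_3
    (f : ℝ → ℝ) (hf : IntegrableOn f (Set.Icc 0 1))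
    (γ : ℝ) (hγ : 0 < γ)
    (X : ℕ → Set ℝ) (hXfin : ∀ k, (X k).Finite) (hXsub : ∀ k, X k ⊆ Set.Icc 0 1)
    (hXnest : ∀ k, X k ⊆ X (k + 1)) (hXdense : Set.Icc (0:ℝ) 1 ⊆ closure (⋃ k, X k))
    (fseq : ℕ → ℝ → ℝ)
    (hsample : (∀ k, IntegralSampled (X k) f (fseq k)) ∨
               (ContinuousOn f (Set.Icc 0 1) ∧ ∀ k, PointSampled (X k) f (fseq k))) :
    -- Γ-convergence of the fully discrete Potts functionals: liminf inequality …
    (∀ u : ℝ → ℝ, IntegrableOn u (Set.Icc 0 1) →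
      ∀ useq : ℕ → ℝ → ℝ, (∀ k, IntegrableOn (useq k) (Set.Icc 0 1)) →
        Tendsto (fun k => L1dist (useq k) u) atTop (nhds 0) →
        Potts γ f u ≤ liminf (fun k => PottsIn γ (fseq k) (X k) (useq k)) atTop) ∧
    -- … and existence of recovery sequences
    (∀ u : ℝ → ℝ, IntegrableOn u (Set.Icc 0 1) →
      ∃ useq : ℕ → ℝ → ℝ, (∀ k, IntegrableOn (useq k) (Set.Icc 0 1)) ∧
        Tendsto (fun k => L1dist (useq k) u) atTop (nhds 0) ∧
        limsup (fun k => PottsIn γ (fseq k) (X k) (useq k)) atTop ≤ Potts γ f u) ∧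
    -- sequences of minimizers have accumulation points, and each accumulation point
    -- minimizes the continuous Potts functional
    (∀ useq : ℕ → ℝ → ℝ,
      (∀ k, ∀ v : ℝ → ℝ, PottsIn γ (fseq k) (X k) (useq k) ≤ PottsIn γ (fseq k) (X k) v) →
      (∃ (u : ℝ → ℝ) (φ : ℕ → ℕ), IntegrableOn u (Set.Icc 0 1) ∧ StrictMono φ ∧
        Tendsto (fun i => L1dist (useq (φ i)) u) atTop (nhds 0)) ∧
      (∀ (u : ℝ → ℝ) (φ : ℕ → ℕ), IntegrableOn u (Set.Icc 0 1) → StrictMono φ →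
        Tendsto (fun i => L1dist (useq (φ i)) u) atTop (nhds 0) →
        Potts γ f u = ⨅ (v : ℝ → ℝ) (_ : IntegrableOn v (Set.Icc 0 1)), Potts γ f v)) := by
  have hX := asymptoticallyDense_of_subset_closure_iUnion (monotone_nat_of_le_succ hXnest) hXdense
  rcases hsample with hfs | ⟨hfc, hfs⟩
  · exact statement_3_general f hf γ hγ X hX fseq
      (fun k => integrable_of_integralSampled (hXfin k) (hfs k))
      (tendsto_L1dist_of_integralSampled hf hX hXfin hXsub hfs)
  · exact statement_3_general f hf γ hγ X hX fseq
      (fun k => integrable_of_pointSampled (hXfin k) (hfs k))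
      (tendsto_L1dist_of_pointSampled hfc hX hXfin hXsub hfs)
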